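/- Let L₁, …, Lₙ ⊆ Σ* be languages and k ∈ ℕ₀. Then the n-ary literal shuffle is invariant under cyclic permutation of its arguments: ⧢₂ⁿ(L₁, …, Lₙ) = ⧢₂ⁿ(L_{((1+k−1) mod n)+1}, …, L_{((n+k−1) mod n)+1}). -/

import Mathlib

/-!
Rotating the arguments by `k` and then by `(n - 1) * k` places is the identity, so it is enough to
show that rotation by one place does not lose any word (`shuffle2_rotate`, `shuffle2L_rot`). Write
the padded words as the rows of a matrix with `n * N` columns, read column by column
(`mem_shuffle2`). Rotating the arguments moves the first row to the bottom.

* If some column `c` consists of dollars only, every word lies either left or right of it. Move the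
  first word one column to the left if it lies right of `c`, and each other word one column to the
  right if it lies left of `c`. The free column `c` leaves room for this, and the order in which
  the letters are read does not change (`flatMap_shift`).
* Otherwise all `n * N` columns contain a letter. As each word has at most `N` letters, every column
  contains exactly one (`unique_of_full`), and the order of the rows is irrelevant.
-/

/-!
Common definitions.

Words over an alphabet `β` are modelled as `List β`.  The alphabet
`Σ ∪ {$}` is modelled as `Option β`, where `none` plays the role of the
dollar sign `$` and `some x` the role of a letter `x ∈ Σ`.  The erasing
homomorphism `h` (with `h($) = ε`, `h(x) = x`) is `List.reduceOption`.
-/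

/-- Perfect interleaving `I(v₁, …, vₙ)` of equal-length words, read column-wise. -/
def interleave {β : Type*} (vs : List (List β)) : List β :=
  vs.transpose.flatten

/-- `$^k u $^r`, the two-sided dollar padding of the word `u`. -/
def dollarPad {β : Type*} (k : ℕ) (u : List β) (r : ℕ) : List (Option β) :=
  List.replicate k none ++ u.map some ++ List.replicate r none

/-- The `n`-ary initial literal shuffle `⧢₁ⁿ(u₁, …, uₙ)`:
pad each word with a fresh symbol (`none`) to the maximal length `N`,
interleave, and erase the fresh symbols. -/
def shuffle1 {β : Type*} {n : ℕ} (us : Fin n → List β) : List β :=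
  (interleave (List.ofFn fun i =>
    (us i).map some ++
      List.replicate ((Finset.univ.sup fun j => (us j).length) - (us i).length)
        (none : Option β))).reduceOption

/-- The `n`-ary literal shuffle `⧢₂ⁿ(u₁, …, uₙ)`:
all erased interleavings of paddings `$^k uᵢ $^{r-k}` with `r = n·N - |uᵢ|`. -/
def shuffle2 {β : Type*} {n : ℕ} (us : Fin n → List β) : Set (List β) :=
  { w | ∃ k : Fin n → ℕ,
      (∀ i, k i ≤ n * (Finset.univ.sup fun j => (us j).length) - (us i).length) ∧
      w = (interleave (List.ofFn fun i =>
        dollarPad (k i) (us i)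
          (n * (Finset.univ.sup fun j => (us j).length) - (us i).length - k i))).reduceOption }

/-- Extension of `⧢₁ⁿ` to languages. -/
def shuffle1L {β : Type*} {n : ℕ} (Ls : Fin n → Set (List β)) : Set (List β) :=
  { w | ∃ us : Fin n → List β, (∀ i, us i ∈ Ls i) ∧ w = shuffle1 us }

/-- Extension of `⧢₂ⁿ` to languages. -/
def shuffle2L {β : Type*} {n : ℕ} (Ls : Fin n → Set (List β)) : Set (List β) :=
  { w | ∃ us : Fin n → List β, (∀ i, us i ∈ Ls i) ∧ w ∈ shuffle2 us }

/-- Iterated version `L^{⧢₁,*} = {ε} ∪ ⋃_{n ≥ 1} ⧢₁ⁿ(L, …, L)`. -/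
def itShuffle1 {β : Type*} (L : Set (List β)) : Set (List β) :=
  {([] : List β)} ∪ ⋃ (n : ℕ) (_ : 1 ≤ n), shuffle1L (fun _ : Fin n => L)

/-- Iterated version `L^{⧢₂,*} = {ε} ∪ ⋃_{n ≥ 1} ⧢₂ⁿ(L, …, L)`. -/
def itShuffle2 {β : Type*} (L : Set (List β)) : Set (List β) :=
  {([] : List β)} ∪ ⋃ (n : ℕ) (_ : 1 ≤ n), shuffle2L (fun _ : Fin n => L)

/-- `IsShuffle u v w` : `w` is an interleaving of `u` and `v`
(ordinary shuffle of words). -/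
inductive IsShuffle {β : Type*} : List β → List β → List β → Prop
  | nil : IsShuffle [] [] []
  | left {a : β} {u v w : List β} : IsShuffle u v w → IsShuffle (a :: u) v (a :: w)
  | right {a : β} {u v w : List β} : IsShuffle u v w → IsShuffle u (a :: v) (a :: w)

/-- Ordinary shuffle of languages `U ⧢ V`. -/
def shuffleL {β : Type*} (U V : Set (List β)) : Set (List β) :=
  { w | ∃ u ∈ U, ∃ v ∈ V, IsShuffle u v w }

/-- `n`-fold ordinary shuffle `L₁ ⧢ ⋯ ⧢ Lₙ` (iterated binary shuffle;
`{ε}` is the neutral element). -/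
def shuffleN {β : Type*} {n : ℕ} (Ls : Fin n → Set (List β)) : Set (List β) :=
  (List.ofFn Ls).foldr shuffleL {([] : List β)}

/-- Iterated ordinary shuffle closure `L^{⧢,*}`. -/
def itShuffleO {β : Type*} (L : Set (List β)) : Set (List β) :=
  {([] : List β)} ∪ ⋃ (n : ℕ) (_ : 1 ≤ n), shuffleN (fun _ : Fin n => L)

/-- Bérard's binary initial literal shuffle of languages. -/
def berardShuffle1 {β : Type*} (U V : Set (List β)) : Set (List β) :=
  { w | (∃ x y v, x ++ y ∈ U ∧ v ∈ V ∧ x.length = v.length ∧ w = interleave [x, v] ++ y) ∨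
        (∃ u x y, u ∈ U ∧ x ++ y ∈ V ∧ x.length = u.length ∧ w = interleave [u, x] ++ y) }

/-- A three-letter alphabet `Σ = {a, b, c}`. -/
inductive ABC : Type
  | a | b | c
deriving DecidableEq

/-! ### Columns of an interleaving -/

/-- Transposing prepends a word to the existing columns one letter at a time: popping `l` along
`acc` conses each letter of `l` onto the corresponding list, and exhausts `l`. -/
theorem mapM_pop {β : Type*} (acc : List (List β)) (l : List β)
    (h : l.length = acc.length) :
    (List.mapM List.transpose.pop acc : StateM (List β) _) l =
      (List.zipWith List.cons l acc, []) := by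
  induction acc generalizing l with
  | nil => simp_all; rfl
  | cons a acc ih =>
    obtain _ | ⟨x, l⟩ := l
    · simp at h
    · rw [List.mapM_cons]
      have := ih l (by simpa using h)
      simp only [bind, StateT.bind, List.transpose.pop, this, pure, StateT.pure]
      rfl

theorem transpose_go {β : Type*} (acc : Array (List β)) (l : List β)
    (h : l.length = acc.size) :
    (List.transpose.go l acc).toList = List.zipWith List.cons l acc.toList := by
  obtain ⟨acc⟩ := acc
  unfold List.transpose.go
  have := mapM_pop acc l (by simpa using h)
  have e : (Array.mapM List.transpose.pop (Array.mk acc) : StateM (List β) _) l =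
      ((List.zipWith List.cons l acc).toArray, []) := by
    rw [List.mapM_toArray]
    simp only [Functor.map, StateT.map, bind, pure, this]
  rw [e]; simp

theorem transpose_go_empty {β : Type*} (l : List β) :
    (List.transpose.go l #[]).toList = l.map (fun a => [a]) := by
  have e : (Array.mapM List.transpose.pop (#[] : Array (List β)) : StateM (List β) _) l =
      (#[], l) := by
    rw [List.mapM_toArray]; rfl
  unfold List.transpose.go
  rw [e]; simp

theorem transpose_eq {β : Type*} (M : ℕ) (vs : List (List β)) (h0 : vs ≠ [])
    (h : ∀ v ∈ vs, v.length = M) :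
    vs.transpose = (List.range M).map fun j => vs.filterMap (fun v => v[j]?) := by
  induction vs with
  | nil => exact absurd rfl h0
  | cons v vs ih =>
    have hv : v.length = M := h v (by simp)
    by_cases hs : vs = []
    · subst hs
      change (List.transpose.go v #[]).toList = _
      rw [transpose_go_empty]
      refine List.ext_getElem (by simp [hv]) fun j h1 h2 => ?_
      simp at h1
      simp [h1]
    · have ih := ih hs (fun w hw => h w (by simp [hw]))
      have e : (v :: vs).transpose = List.zipWith List.cons v vs.transpose := by
        have hl := congrArg List.length ih
        exact transpose_go _ _ (by simpa [hv, List.transpose] using hl.symm)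
      rw [e, ih]
      refine List.ext_getElem (by simp [hv]) fun j h1 h2 => ?_
      simp at h1
      simp [h1.1]

/-- An erased interleaving is read column by column. -/
theorem reduceOption_interleave {β : Type*} (M : ℕ) (vs : List (List (Option β))) (h0 : vs ≠ [])
    (h : ∀ v ∈ vs, v.length = M) :
    (interleave vs).reduceOption =
      (List.range M).flatMap fun j => vs.filterMap (fun v => v[j]?.join) := by
  unfold interleave
  rw [transpose_eq M vs h0 h, ← List.flatMap_def, List.reduceOption, List.filterMap_flatMap]
  congr 1; funext j
  rw [List.filterMap_filterMap]
  rfl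

/-- The symbol in column `j` of the word `$^k u $^r`, where `none` is the dollar sign; it does not
depend on `r`, since beyond the end of `u` the value is `none`. -/
def letter {β : Type*} (k : ℕ) (u : List β) (j : ℕ) : Option β :=
  if k ≤ j then u[j - k]? else none

theorem dollarPad_getElem {β : Type*} (k : ℕ) (u : List β) (r j : ℕ) :
    (dollarPad k u r)[j]?.join = letter k u j := by
  unfold dollarPad letter
  grind [Option.join]

theorem letter_eq_none {β : Type*} {k : ℕ} {u : List β} {j : ℕ} :
    letter k u j = none ↔ j < k ∨ k + u.length ≤ j := by
  unfold letter; grind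

/-- The erased interleaving of the words `us i`, the `i`-th one preceded by `k i` dollars, restricted
to the columns `0, …, M - 1`. -/
def cols {α : Type*} {n : ℕ} (us : Fin n → List α) (k : Fin n → ℕ) (M : ℕ) : List α :=
  (List.range M).flatMap fun j => (List.ofFn fun i => letter (k i) (us i) j).reduceOption

/-- The literal shuffle in terms of offsets and columns. For `m + 1` words the truncated
subtractions in its definition are genuine, because `|us i| ≤ N ≤ (m + 1) * N`. -/
theorem mem_shuffle2 {α : Type*} {m : ℕ} (us : Fin (m + 1) → List α) (w : List α) {N : ℕ}
    (hN : N = Finset.univ.sup fun j => (us j).length) :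
    w ∈ shuffle2 us ↔ ∃ k : Fin (m + 1) → ℕ, (∀ i, k i + (us i).length ≤ (m + 1) * N) ∧
      w = cols us k ((m + 1) * N) := by
  have hle i : (us i).length ≤ (m + 1) * N :=
    (Finset.le_sup (f := fun j => (us j).length) (Finset.mem_univ i)).trans
      (hN ▸ Nat.le_mul_of_pos_left _ (by simp))
  simp only [shuffle2, Set.mem_ofPred_eq, ← hN]
  refine exists_congr fun k => ?_
  have hb : (∀ i, k i ≤ (m + 1) * N - (us i).length) ↔ ∀ i, k i + (us i).length ≤ (m + 1) * N :=
    forall_congr' fun i => by have := hle i; omega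
  rw [hb]
  refine and_congr_right fun hk => ?_
  rw [reduceOption_interleave ((m + 1) * N)]
  · have (j : ℕ) : List.filterMap (fun v => v[j]?.join) (List.ofFn fun i =>
        dollarPad (k i) (us i) ((m + 1) * N - (us i).length - k i)) =
        (List.ofFn fun i => letter (k i) (us i) j).reduceOption := by
      rw [← funext fun i => dollarPad_getElem (k i) (us i) ((m + 1) * N - (us i).length - k i) j,
        List.reduceOption]
      have h := List.map_ofFn (f := fun i => dollarPad (k i) (us i)
        ((m + 1) * N - (us i).length - k i)) (g := fun v => v[j]?.join)
      rw [Function.comp_def] at h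
      rw [← h, List.filterMap_map]
      rfl
    simp only [this, cols]
  · simp
  · intro v hv
    rw [List.mem_ofFn] at hv
    obtain ⟨i, rfl⟩ := hv
    have := hk i
    simp [dollarPad]; omega

/-! ### Rotation by one place -/

/-- The shift through an empty column. `X j` and `T j` are the first entry and the remaining
entries of column `j`. If column `c` is empty, the concatenation `X 0, T 0, X 1, T 1, …` is also
obtained by reading the `T`-part first in every column: delay the `T`-parts left of `c` by one
column, and advance the `X`-parts right of `c` by one column. -/
theorem flatMap_shift {α : Type*} {X T X' T' : ℕ → List α} {c M : ℕ} (hc : c < M)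
    (hXc : X c = []) (hTc : T c = []) (hXM : X M = []) (hT0 : T' 0 = [])
    (hX : ∀ j < c, X' j = X j) (hX' : ∀ j, c ≤ j → X' j = X (j + 1))
    (hT : ∀ j < c, T' (j + 1) = T j) (hT' : ∀ j, c < j → T' j = T j) :
    ((List.range M).flatMap fun j => T' j ++ X' j) =
      (List.range M).flatMap fun j => X j ++ T j := by
  have before : ∀ p ≤ c, ((List.range p).flatMap fun j => T' j ++ X' j) ++ T' p =
      (List.range p).flatMap fun j => X j ++ T j := by
    intro p
    induction p with
    | zero => simp [hT0]
    | succ p ih =>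
      intro hp
      have ih := ih (by omega)
      simp only [List.range_succ, List.flatMap_append, List.flatMap_singleton]
      rw [← ih, hX p (by omega), hT p (by omega)]
      simp
  have after : ∀ p, c ≤ p → ((List.range (p + 1)).flatMap fun j => T' j ++ X' j) =
      ((List.range (p + 1)).flatMap fun j => X j ++ T j) ++ X (p + 1) := by
    intro p hp
    induction p, hp using Nat.le_induction with
    | base =>
      simp only [List.range_succ, List.flatMap_append, List.flatMap_singleton]
      rw [← before c le_rfl, hXc, hTc, hX' c le_rfl]
      simp
    | succ p hp ih =>
      rw [List.range_succ, List.flatMap_append, List.flatMap_append, ih]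
      simp [hX' (p + 1) (by omega), hT' (p + 1) (by omega)]
  obtain ⟨p, rfl⟩ : ∃ p, M = p + 1 := ⟨M - 1, by omega⟩
  rw [after p (by omega), hXM, List.append_nil]

/-- Pigeonhole: the words have at most `n * N` letters in total, so if each of the `n * N` columns
contains a letter, none contains two. -/
theorem unique_of_full {ι α : Type*} [Fintype ι] (us : ι → List α) (k : ι → ℕ) {N : ℕ}
    (hN : ∀ i, (us i).length ≤ N)
    (hfull : ∀ c < Fintype.card ι * N, ∃ i, letter (k i) (us i) c ≠ none)
    {j : ℕ} (hj : j < Fintype.card ι * N) {a b : ι}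
    (ha : letter (k a) (us a) j ≠ none) (hb : letter (k b) (us b) j ≠ none) : a = b := by
  classical
  by_contra hab
  set M := Fintype.card ι * N
  let S : ℕ → Finset ι := fun c => Finset.univ.filter fun i => letter (k i) (us i) c ≠ none
  have h1 : ∑ c ∈ Finset.range M, 1 < ∑ c ∈ Finset.range M, (S c).card := by
    refine Finset.sum_lt_sum (fun c hc => ?_) ⟨j, by simpa using hj, ?_⟩
    · obtain ⟨i, hi⟩ := hfull c (by simpa using hc)
      exact Finset.card_pos.2 ⟨i, by simpa [S] using hi⟩
    · exact Finset.one_lt_card.2 ⟨a, by simpa [S] using ha, b, by simpa [S] using hb, hab⟩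
  have h2 : ∑ c ∈ Finset.range M, (S c).card =
      ∑ i, ((Finset.range M).filter fun c => letter (k i) (us i) c ≠ none).card := by
    simp only [S, Finset.card_filter]
    exact Finset.sum_comm
  have h3 : ∑ i, ((Finset.range M).filter fun c => letter (k i) (us i) c ≠ none).card ≤ M := by
    calc _ ≤ ∑ _i : ι, N := Finset.sum_le_sum fun i _ => by
          refine (Finset.card_le_card (t := Finset.Ico (k i) (k i + (us i).length)) ?_).trans ?_
          · intro c hc
            simp only [Finset.mem_filter, ne_eq, letter_eq_none] at hc
            simp only [Finset.mem_Ico]; omega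
          · simpa using hN i
      _ = M := by simp [M]
  simp at h1
  omega

/-- Rotating the words by one place does not lose any word of the shuffle. -/
theorem shuffle2_rotate {α : Type*} {m : ℕ} (us : Fin (m + 1) → List α) :
    shuffle2 us ⊆ shuffle2 (Fin.snoc (fun i => us i.succ) (us 0) : Fin (m + 1) → List α) := by
  intro w hw
  set N := Finset.univ.sup fun j => (us j).length with hN
  have hle i : (us i).length ≤ N :=
    Finset.le_sup (f := fun j => (us j).length) (Finset.mem_univ i)
  have hN' : N = Finset.univ.sup fun j =>
      ((Fin.snoc (fun i => us i.succ) (us 0) : Fin (m + 1) → List α) j).length := by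
    apply le_antisymm
    · refine Finset.sup_le fun i _ => ?_
      induction i using Fin.cases with
      | zero =>
        refine le_trans ?_ (Finset.le_sup (Finset.mem_univ (Fin.last m)))
        simp
      | succ i =>
        refine le_trans ?_ (Finset.le_sup (Finset.mem_univ (Fin.castSucc i)))
        simp
    · refine Finset.sup_le fun i _ => ?_
      induction i using Fin.lastCases with
      | last => simpa using hle _
      | cast i => simpa using hle _
  rw [mem_shuffle2 us w hN] at hw
  rw [mem_shuffle2 _ w hN']
  obtain ⟨k, hk, rfl⟩ := hw
  set M := (m + 1) * N with hM
  have hnil (f : Fin m → Option α) (hf : ∀ i, f i = none) :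
      (List.ofFn f).reduceOption = [] := by
    rw [List.reduceOption_eq_nil_iff]
    exact ⟨m, by rw [funext hf, List.ofFn_const]⟩
  -- Rotation moves the letter of `us 0` from the front of each column to its end.
  have split (k0 : ℕ) (ks : Fin m → ℕ) :
      cols (Fin.snoc (fun i => us i.succ) (us 0) : Fin (m + 1) → List α)
        (Fin.snoc ks k0 : Fin (m + 1) → ℕ) M = (List.range M).flatMap fun j =>
        (List.ofFn fun i => letter (ks i) (us i.succ) j).reduceOption ++
          [letter k0 (us 0) j].reduceOption := by
    simp only [cols, List.ofFn_succ_last, List.reduceOption_append, Fin.snoc_castSucc,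
      Fin.snoc_last]
  have split' : cols us k M = (List.range M).flatMap fun j =>
      [letter (k 0) (us 0) j].reduceOption ++
        (List.ofFn fun i : Fin m => letter (k i.succ) (us i.succ) j).reduceOption := by
    simp only [cols, List.ofFn_succ, ← List.reduceOption_append, List.singleton_append]
  -- Without an all-dollar column each column holds a single letter, so its position inside the
  -- column is irrelevant and the same offsets work.
  by_cases hfull : ∀ c < M, ∃ i, letter (k i) (us i) c ≠ none
  · refine ⟨Fin.snoc (fun i => k i.succ) (k 0), ?_, ?_⟩
    · intro i
      induction i using Fin.lastCases with
      | last => simpa using hk _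
      | cast i => simpa using hk _
    · rw [split, split']
      refine List.flatMap_congr fun j hj => ?_
      have hu := @unique_of_full _ _ _ us k N hle (by simpa [M] using hfull) j
        (by simpa [M] using hj)
      by_cases h0 : letter (k 0) (us 0) j = none
      · simp [h0, List.reduceOption]
      · rw [hnil]
        · simp
        · intro i
          by_contra hi
          exact absurd (hu h0 hi) (Fin.succ_ne_zero i).symm
  · push Not at hfull
    obtain ⟨c, hc, hcn⟩ := hfull
    have hcn' i := letter_eq_none.1 (hcn i)
    -- The other words move one column right if they end before column `c`, and `us 0` moves one
    -- column left if it starts after column `c`.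
    refine ⟨Fin.snoc (fun i => if k i.succ + (us i.succ).length ≤ c then k i.succ + 1
      else k i.succ) (if k 0 + (us 0).length ≤ c then k 0 else k 0 - 1), ?_, ?_⟩
    · intro i
      induction i using Fin.lastCases with
      | last => have := hk 0; simp; split <;> omega
      | cast i => have := hk i.succ; simp; split <;> omega
    · rw [split, split']
      symm
      refine flatMap_shift hc ?_ ?_ ?_ ?_ ?_ ?_ ?_ ?_
      · rw [hcn 0]; rfl
      · exact hnil _ fun i => hcn _
      · rw [letter_eq_none.2 (Or.inr (hk 0))]; rfl
      · refine hnil _ fun i => ?_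
        rw [letter_eq_none]
        have := hcn' i.succ
        split <;> omega
      · intro j hj
        have := hcn' 0
        congr 2
        unfold letter
        grind
      · intro j hj
        have := hcn' 0
        congr 2
        unfold letter
        grind
      · intro j hj
        congr 2; funext i
        have := hcn' i.succ
        unfold letter
        grind
      · intro j hj
        congr 2; funext i
        have := hcn' i.succ
        unfold letter
        grind

/-! ### Rotation by several places -/

/-- The cyclic permutation of a family of arguments by `k` places. -/
def rot {β : Type*} {n : ℕ} (k : ℕ) (f : Fin n → β) : Fin n → β :=
  fun i => f ⟨(i.val + k) % n, Nat.mod_lt _ i.pos⟩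

theorem rot_rot {β : Type*} {n : ℕ} (k l : ℕ) (f : Fin n → β) :
    rot l (rot k f) = rot (l + k) f := by
  funext i; simp [rot, add_assoc]

theorem rot_mul {β : Type*} {n : ℕ} (q : ℕ) (f : Fin n → β) : rot (n * q) f = f := by
  funext i; simp [rot, Nat.mod_eq_of_lt i.isLt]

theorem rot_one {β : Type*} {m : ℕ} (f : Fin (m + 1) → β) :
    rot 1 f = (Fin.snoc (fun i => f i.succ) (f 0) : Fin (m + 1) → β) := by
  funext i
  induction i using Fin.lastCases with
  | last => simp [rot]
  | cast i => simp [rot]; congr 1; ext; simp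

theorem shuffle2L_rot {α : Type*} {m : ℕ} (Ls : Fin (m + 1) → Set (List α)) (k : ℕ) :
    shuffle2L Ls ⊆ shuffle2L (rot k Ls) := by
  induction k with
  | zero => exact (congrArg _ (rot_mul 0 Ls)).ge
  | succ k ih =>
    refine ih.trans ?_
    rw [Nat.add_comm k 1, ← rot_rot]
    rintro w ⟨us, hus, hw⟩
    refine ⟨rot 1 us, fun i => hus _, ?_⟩
    rw [rot_one]
    exact shuffle2_rotate us hw

/-- The `n`-ary literal shuffle of languages is invariant under
cyclic permutation of its arguments: `⧢₂ⁿ(L₁,…,Lₙ) = ⧢₂ⁿ(L_{1+k},…,L_{n+k})`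
(indices taken cyclically, i.e. mod `n`). -/
theorem stmt6 {α : Type*} {n : ℕ} (Ls : Fin n → Set (List α)) (k : ℕ) :
    shuffle2L Ls =
      shuffle2L (fun i : Fin n => Ls ⟨(i.val + k) % n, Nat.mod_lt _ i.pos⟩) := by
  cases n with
  | zero => exact congrArg _ (Subsingleton.elim _ _)
  | succ m =>
    refine (shuffle2L_rot Ls k).antisymm ?_
    -- Rotating by `k` and then by `m * k` is rotating by `(m + 1) * k`, which is the identity.
    have h := shuffle2L_rot (rot k Ls) (m * k)
    rwa [rot_rot, ← Nat.succ_mul, Nat.succ_eq_add_one, rot_mul] at h
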